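/- Let (x^n) be generated by the iPiano update x^{n+1} = prox_{α_n g}(x^n − α_n ∇f(x^n) + β_n(x^n − x^{n-1})) with β_n ∈ [0,1) and α_n ≥ c₁ > 0 with c₁ ≤ 1. Then for each n, ‖x^{n+1} − x^n‖ ≥ c₁‖r(x^n)‖ − ‖x^n − x^{n-1}‖, where r(x) = x − prox_g(x − ∇f(x)) is the proximal residual at step size 1. -/

import Mathlib

open RealInnerProductSpace

variable {N : ℕ}

/-- `p` is the proximal point of `g` with parameter `α > 0` at `w`, i.e. a minimizer of
`x ↦ ‖x - w‖²/2 + α g x`. -/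
def IsProxPt (g : EuclideanSpace ℝ (Fin N) → EReal) (α : ℝ)
    (w p : EuclideanSpace ℝ (Fin N)) : Prop :=
  ∀ x, ((‖p - w‖ ^ 2 / 2 : ℝ) : EReal) + (α : EReal) * g p
      ≤ ((‖x - w‖ ^ 2 / 2 : ℝ) : EReal) + (α : EReal) * g x

/-!
For `r = x - prox_{τg}(x - τv)` and the step `d = prox_{αg}(x - αv + e) - x`, monotonicity of the
subdifferential of `g` gives `⟪d + r, τ(d - e) + αr⟫ ≤ 0`. Since `⟪a, b⟫ ≤ 0` means
`‖a + b‖ ≤ ‖a - b‖`, two triangle inequalities turn this into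
`(τ + α - |τ - α|) ‖r‖ ≤ 2τ (‖d‖ + ‖e‖)`, where the factor on the left is `2 min(τ, α)`. The iPiano
step, with `x⁻` the previous iterate, is the case `τ = 1`, `e = β(x - x⁻)`.
-/

open Filter Set Topology

/-- Convexity of an extended-real-valued function. `ConvexOn` does not apply, since `EReal` carries
no scalar multiplication by `ℝ`. As `⊤ + ⊥ = ⊥`, this is the usual notion only when `g` never takes
the value `⊥`. -/
def ERealConvex {E : Type*} [AddCommMonoid E] [SMul ℝ E] (g : E → EReal) : Prop :=
  ∀ (x y : E) (a b : ℝ), 0 ≤ a → 0 ≤ b → a + b = 1 →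
    g (a • x + b • y) ≤ (a : EReal) * g x + (b : EReal) * g y

/-- The function whose minimizers are the proximal points of `g` at `w` with step size `α > 0`.
It is scaled by `α`, as in `IsProxPt`, so that no division occurs. -/
noncomputable def proxObjective {E : Type*} [SeminormedAddCommGroup E] (g : E → EReal) (α : ℝ)
    (w x : E) : EReal :=
  ((‖x - w‖ ^ 2 / 2 : ℝ) : EReal) + (α : EReal) * g x

theorem le_of_forall_le_add_mul {a b k : ℝ} (h : ∀ t ∈ Ioc (0 : ℝ) 1, a ≤ b + t * k) : a ≤ b := by
  have hlim : Tendsto (fun t : ℝ ↦ b + t * k) (𝓝[>] 0) (𝓝 b) :=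
    tendsto_nhdsWithin_of_tendsto_nhds (Continuous.tendsto' (by fun_prop) _ _ (by simp))
  exact ge_of_tendsto hlim (eventually_of_mem (Ioc_mem_nhdsGT one_pos) h)

section ProximalPoint

variable {E : Type*} [SeminormedAddCommGroup E] {g : E → EReal} {α τ : ℝ} {w w' p p' : E}

theorem ne_top_of_isMinOn_proxObjective (hproper : ∃ z, g z ≠ ⊤) (hα : 0 < α)
    (hp : IsMinOn (proxObjective g α w) univ p) : g p ≠ ⊤ := by
  obtain ⟨z, hz⟩ := hproper
  have hz_top : proxObjective g α w z ≠ ⊤ :=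
    EReal.add_ne_top (EReal.coe_ne_top _) (by simp [EReal.mul_ne_top, hz, hα.le])
  intro htop
  refine hz_top (top_le_iff.1 ?_)
  simpa [proxObjective, htop, EReal.coe_mul_top_of_pos hα] using isMinOn_univ_iff.1 hp z

variable [InnerProductSpace ℝ E]

theorem norm_add_le_norm_sub_of_inner_nonpos {x y : E} (h : ⟪x, y⟫ ≤ 0) : ‖x + y‖ ≤ ‖x - y‖ := by
  refine le_of_sq_le_sq ?_ (norm_nonneg _)
  linarith [norm_add_sq_real x y, norm_sub_sq_real x y]

theorem min_mul_norm_le_of_inner_nonpos {d e r : E} (hτ : 0 ≤ τ) (hα : 0 ≤ α)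
    (h : ⟪d + r, τ • (d - e) + α • r⟫ ≤ 0) : min τ α * ‖r‖ ≤ τ * (‖d‖ + ‖e‖) := by
  set a := τ • (d + r) with ha
  set b := τ • (d - e) + α • r with hb
  have hab : ‖a + b‖ ≤ ‖a - b‖ := by
    refine norm_add_le_norm_sub_of_inner_nonpos ?_
    rw [ha, real_inner_smul_left]
    exact mul_nonpos_of_nonneg_of_nonpos hτ h
  have hlower : (τ + α) * ‖r‖ ≤ ‖a + b‖ + τ * (2 * ‖d‖ + ‖e‖) := by
    calc (τ + α) * ‖r‖ = ‖(τ + α) • r‖ := by rw [norm_smul_of_nonneg (by positivity)]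
      _ = ‖(a + b) - τ • ((2 : ℝ) • d - e)‖ := by rw [ha, hb]; congr 1; module
      _ ≤ ‖a + b‖ + τ * (2 * ‖d‖ + ‖e‖) := by
        grw [norm_sub_le, norm_smul_of_nonneg hτ, norm_sub_le, norm_smul_of_nonneg zero_le_two]
  have hupper : ‖a - b‖ ≤ |τ - α| * ‖r‖ + τ * ‖e‖ := by
    calc ‖a - b‖ = ‖(τ - α) • r + τ • e‖ := by rw [ha, hb]; congr 1; module
      _ ≤ |τ - α| * ‖r‖ + τ * ‖e‖ := by
        grw [norm_add_le, norm_smul, norm_smul_of_nonneg hτ, Real.norm_eq_abs]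
  have hmin : 2 * min τ α = τ + α - |τ - α| := by
    linarith [min_add_max τ α, max_sub_min_eq_abs' τ α]
  linear_combination (hlower + hab + hupper + ‖r‖ * hmin) / 2

theorem inner_le_add_of_isMinOn_proxObjective (hconv : ERealConvex g) (hα : 0 ≤ α)
    (hp : IsMinOn (proxObjective g α w) univ p) {z : E} {a b t : ℝ} (ha : g p = a) (hb : g z = b)
    (ht : t ∈ Ioc (0 : ℝ) 1) :
    ⟪w - p, z - p⟫ ≤ α * (b - a) + t * (‖z - p‖ ^ 2 / 2) := by
  have hmin : ‖p - w‖ ^ 2 / 2 + α * a ≤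
      ‖(1 - t) • p + t • z - w‖ ^ 2 / 2 + α * ((1 - t) * a + t * b) := by
    have hg := hconv p z (1 - t) t (sub_nonneg.2 ht.2) ht.1.le (sub_add_cancel 1 t)
    have hseg := (isMinOn_univ_iff.1 hp ((1 - t) • p + t • z)).trans
      (add_le_add_right (mul_le_mul_of_nonneg_left hg (EReal.coe_nonneg.2 hα)) _)
    rw [proxObjective, ha, hb] at hseg
    exact_mod_cast hseg
  have hexpand : ‖(1 - t) • p + t • z - w‖ ^ 2 =
      t ^ 2 * ‖z - p‖ ^ 2 - 2 * (t * ⟪w - p, z - p⟫) + ‖p - w‖ ^ 2 := by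
    rw [show (1 - t) • p + t • z - w = t • (z - p) - (w - p) by module, norm_sub_sq_real,
      norm_smul, mul_pow, Real.norm_eq_abs, sq_abs, real_inner_smul_left,
      real_inner_comm (w - p), norm_sub_rev w p]
  refine le_of_mul_le_mul_left ?_ ht.1
  linarith

theorem inner_le_of_isMinOn_proxObjective (hconv : ERealConvex g) (hα : 0 ≤ α)
    (hp : IsMinOn (proxObjective g α w) univ p) {z : E} {a b : ℝ} (ha : g p = a) (hb : g z = b) :
    ⟪w - p, z - p⟫ ≤ α * (b - a) :=
  le_of_forall_le_add_mul fun _ ht ↦ inner_le_add_of_isMinOn_proxObjective hconv hα hp ha hb ht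

/-- Monotonicity of the subdifferential: `(w - p) / α` and `(w' - p') / τ` are subgradients of `g`
at `p` and `p'`. -/
theorem inner_smul_sub_smul_nonneg_of_isMinOn_proxObjective (hproper : ∃ z, g z ≠ ⊤)
    (hnobot : ∀ z, g z ≠ ⊥) (hconv : ERealConvex g) (hα : 0 < α) (hτ : 0 < τ)
    (hp : IsMinOn (proxObjective g α w) univ p)
    (hp' : IsMinOn (proxObjective g τ w') univ p') :
    0 ≤ ⟪τ • (w - p) - α • (w' - p'), p - p'⟫ := by
  have ha := (EReal.coe_toReal (ne_top_of_isMinOn_proxObjective hproper hα hp) (hnobot p)).symm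
  have hb := (EReal.coe_toReal (ne_top_of_isMinOn_proxObjective hproper hτ hp') (hnobot p')).symm
  have hle := mul_le_mul_of_nonneg_left
    (inner_le_of_isMinOn_proxObjective hconv hα.le hp ha hb) hτ.le
  have hle' := mul_le_mul_of_nonneg_left
    (inner_le_of_isMinOn_proxObjective hconv hτ.le hp' hb ha) hα.le
  rw [← neg_sub p p', inner_neg_right] at hle
  rw [inner_sub_left, real_inner_smul_left, real_inner_smul_left]
  linarith

theorem min_mul_norm_sub_le_of_isMinOn_proxObjective (hproper : ∃ z, g z ≠ ⊤)
    (hnobot : ∀ z, g z ≠ ⊥) (hconv : ERealConvex g) (hα : 0 < α) (hτ : 0 < τ) {x v e : E}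
    (hp : IsMinOn (proxObjective g α (x - α • v + e)) univ p)
    (hp' : IsMinOn (proxObjective g τ (x - τ • v)) univ p') :
    min τ α * ‖x - p'‖ ≤ τ * (‖p - x‖ + ‖e‖) := by
  refine min_mul_norm_le_of_inner_nonpos hτ.le hα.le ?_
  have hmono := inner_smul_sub_smul_nonneg_of_isMinOn_proxObjective
    hproper hnobot hconv hα hτ hp hp'
  rwa [show τ • (x - α • v + e - p) - α • (x - τ • v - p') =
      -(τ • (p - x - e) + α • (x - p')) by module, ← sub_add_sub_cancel p x p',
    inner_neg_left, real_inner_comm, neg_nonneg] at hmono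

theorem ipiano_step_residual_bound_general (hproper : ∃ z, g z ≠ ⊤) (hnobot : ∀ z, g z ≠ ⊥)
    (hconv : ERealConvex g) {c β : ℝ} (hc : c ≤ 1) (hα : 0 < α) (hcα : c ≤ α) (hβ : |β| ≤ 1)
    {v xprev x xnext q : E}
    (hnext : IsMinOn (proxObjective g α (x - α • v + β • (x - xprev))) univ xnext)
    (hq : IsMinOn (proxObjective g 1 (x - v)) univ q) :
    c * ‖x - q‖ - ‖x - xprev‖ ≤ ‖xnext - x‖ := by
  rw [sub_le_iff_le_add]
  calc c * ‖x - q‖ ≤ min 1 α * ‖x - q‖ := by gcongr; exact le_min hc hcα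
    _ ≤ ‖xnext - x‖ + ‖β • (x - xprev)‖ := by
      rw [← one_smul ℝ v] at hq
      simpa only [one_mul, one_smul] using
        min_mul_norm_sub_le_of_isMinOn_proxObjective hproper hnobot hconv hα one_pos hnext hq
    _ ≤ ‖xnext - x‖ + ‖x - xprev‖ := by
      rw [norm_smul, Real.norm_eq_abs]
      gcongr
      exact mul_le_of_le_one_left (norm_nonneg _) hβ

end ProximalPoint

/-- **Residual bound for one iPiano step.** If
`x^{n+1} = prox_{α_n g}(x^n - α_n ∇f(x^n) + β_n(x^n - x^{n-1}))` with `β_n ∈ [0,1)` and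
`α_n ≥ c₁`, `0 < c₁ ≤ 1`, then
`‖x^{n+1} - x^n‖ ≥ c₁‖r(x^n)‖ - ‖x^n - x^{n-1}‖`,
where `r(x) = x - prox_g(x - ∇f x)` is the proximal residual at step size 1, and
`q = prox_g(x^n - ∇f(x^n))`. -/
theorem ipiano_step_residual_bound
    (f : EuclideanSpace ℝ (Fin N) → ℝ)
    (f' : EuclideanSpace ℝ (Fin N) → EuclideanSpace ℝ (Fin N))
    (hf : ∀ y, HasGradientAt f (f' y) y) (hf' : Continuous f')
    (g : EuclideanSpace ℝ (Fin N) → EReal)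
    (hproper : ∃ z, g z ≠ ⊤) (hnobot : ∀ z, g z ≠ ⊥)
    (hlsc : LowerSemicontinuous g)
    (hconv : ∀ (x y : EuclideanSpace ℝ (Fin N)) (a b : ℝ), 0 ≤ a → 0 ≤ b → a + b = 1 →
      g (a • x + b • y) ≤ (a : EReal) * g x + (b : EReal) * g y)
    (c₁ αn βn : ℝ) (hc₁ : 0 < c₁) (hc₁1 : c₁ ≤ 1) (hαn : c₁ ≤ αn)
    (hβ0 : 0 ≤ βn) (hβ1 : βn < 1)
    (xm1 x0 x1 q : EuclideanSpace ℝ (Fin N))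
    -- `x^{n+1}` is the proximal point of the iPiano forward step
    (hx1 : IsProxPt g αn (x0 - αn • f' x0 + βn • (x0 - xm1)) x1)
    -- `q = prox_g(x^n - ∇f(x^n))`, so that `r(x^n) = x^n - q`
    (hq : IsProxPt g 1 (x0 - f' x0) q) :
    c₁ * ‖x0 - q‖ - ‖x0 - xm1‖ ≤ ‖x1 - x0‖ :=
  ipiano_step_residual_bound_general hproper hnobot hconv hc₁1 (hc₁.trans_le hαn) hαn
    (abs_le.2 ⟨by linarith, hβ1.le⟩) (isMinOn_univ_iff.2 hx1) (isMinOn_univ_iff.2 hq)
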